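/- Fix integers P_1 < P_2 < Q_2 < Q_1 and integers A_1, A_2. For ε > 0 set p_i = e^{P_i/ε}, q_i = e^{Q_i/ε}, η_i^ε = e^{A_i/ε}·φ_ε(P_i)/φ_ε(Q_i) (i = 1,2), θ_{12}^ε = (p_2 − p_1)(q_1 − q_2) / ( (q_1 − p_2)(q_2 − p_1) ), and τ_ε = 1 + η_1^ε + η_2^ε + θ_{12}^ε·η_1^ε·η_2^ε. Then lim_{ε→0⁺} ε·log τ_ε = max( 0, Θ_1, Θ_2, Θ_1 + Θ_2 + P_2 − Q_2 ), where Θ_i = A_i + n·(P_i − Q_i) + l·( max(0, P_i − r) − max(0, Q_i − r) ) + m·( max(0, −Q_i − s) − max(0, −P_i − s) ). -/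

import Mathlib

/-!
The ultradiscrete limit `lim ε log f_ε` is a morphism to the max-plus semiring on positive
functions: it turns products into sums, real powers into scalar multiples and, because
`max x y ≤ x + y ≤ 2 max x y` and `ε log 2 → 0`, sums into maxima. A difference is not so controlled
in general, but if the limit `b` of `g` is strictly below the limit `a` of `f`, then `g / f → 0`,
and `f - g = f (1 - g / f)` again has limit `a`. The tau function is built from exponentials by
these operations, the differences being those in `θ₁₂`.
-/

open Filter Topology

/-- The function `f` has ultradiscrete limit `a`: `ε log (f ε) → a` as `ε → 0⁺`. Positivity near
`0⁺` is part of the notion, since `Real.log` takes junk values at nonpositive arguments. -/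
structure HasUltradiscreteLimit (f : ℝ → ℝ) (a : ℝ) : Prop where
  eventually_pos : ∀ᶠ ε in 𝓝[>] 0, 0 < f ε
  tendsto : Tendsto (fun ε ↦ ε * Real.log (f ε)) (𝓝[>] 0) (𝓝 a)

namespace HasUltradiscreteLimit

variable {f g h : ℝ → ℝ} {a b c : ℝ}

theorem of_tendsto_pos (hf : Tendsto f (𝓝[>] 0) (𝓝 c)) (hc : 0 < c) :
    HasUltradiscreteLimit f 0 where
  eventually_pos := hf.eventually_const_lt hc
  tendsto := by
    have hε : Tendsto (fun ε : ℝ ↦ ε) (𝓝[>] 0) (𝓝 0) :=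
      tendsto_nhdsWithin_of_tendsto_nhds tendsto_id
    simpa only [zero_mul] using hε.mul (hf.log hc.ne')

theorem const (hc : 0 < c) : HasUltradiscreteLimit (fun _ ↦ c) 0 :=
  of_tendsto_pos tendsto_const_nhds hc

theorem exp_div (a : ℝ) : HasUltradiscreteLimit (fun ε ↦ Real.exp (a / ε)) a where
  eventually_pos := .of_forall fun _ ↦ Real.exp_pos _
  tendsto := by
    refine tendsto_const_nhds.congr' ?_
    filter_upwards [self_mem_nhdsWithin] with ε (hε : 0 < ε)
    rw [Real.log_exp, mul_div_cancel₀ a hε.ne']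

protected theorem mul (hf : HasUltradiscreteLimit f a) (hg : HasUltradiscreteLimit g b) :
    HasUltradiscreteLimit (fun ε ↦ f ε * g ε) (a + b) where
  eventually_pos := by
    filter_upwards [hf.eventually_pos, hg.eventually_pos] with ε hfε hgε using mul_pos hfε hgε
  tendsto := by
    refine (hf.tendsto.add hg.tendsto).congr' ?_
    filter_upwards [hf.eventually_pos, hg.eventually_pos] with ε hfε hgε
    rw [Real.log_mul hfε.ne' hgε.ne', mul_add]

theorem rpow_const (hf : HasUltradiscreteLimit f a) (k : ℝ) :
    HasUltradiscreteLimit (fun ε ↦ f ε ^ k) (k * a) where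
  eventually_pos := by
    filter_upwards [hf.eventually_pos] with ε hfε using Real.rpow_pos_of_pos hfε k
  tendsto := by
    refine (hf.tendsto.const_mul k).congr' ?_
    filter_upwards [hf.eventually_pos] with ε hfε
    rw [Real.log_rpow hfε, mul_left_comm]

protected theorem div (hf : HasUltradiscreteLimit f a) (hg : HasUltradiscreteLimit g b) :
    HasUltradiscreteLimit (fun ε ↦ f ε / g ε) (a - b) := by
  simpa only [Real.rpow_neg_one, ← div_eq_mul_inv, neg_one_mul, ← sub_eq_add_neg]
    using hf.mul (hg.rpow_const (-1))

protected theorem max (hf : HasUltradiscreteLimit f a) (hg : HasUltradiscreteLimit g b) :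
    HasUltradiscreteLimit (fun ε ↦ max (f ε) (g ε)) (max a b) where
  eventually_pos := by
    filter_upwards [hf.eventually_pos] with ε hfε using lt_max_of_lt_left hfε
  tendsto := by
    refine (hf.tendsto.max hg.tendsto).congr' ?_
    filter_upwards [hf.eventually_pos, hg.eventually_pos, self_mem_nhdsWithin]
      with ε hfε hgε (hε : 0 < ε)
    rw [Real.strictMonoOn_log.monotoneOn.map_max hfε hgε, mul_max_of_nonneg _ _ hε.le]

theorem squeeze (hf : HasUltradiscreteLimit f a) (hg : HasUltradiscreteLimit g a)
    (hfh : ∀ᶠ ε in 𝓝[>] 0, f ε ≤ h ε) (hhg : ∀ᶠ ε in 𝓝[>] 0, h ε ≤ g ε) :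
    HasUltradiscreteLimit h a := by
  have h_pos : ∀ᶠ ε in 𝓝[>] 0, 0 < h ε := by
    filter_upwards [hf.eventually_pos, hfh] with ε hfε hle using hfε.trans_le hle
  refine ⟨h_pos, tendsto_of_tendsto_of_tendsto_of_le_of_le' hf.tendsto hg.tendsto ?_ ?_⟩
  · filter_upwards [hf.eventually_pos, hfh, self_mem_nhdsWithin] with ε hfε hle (hε : 0 < ε)
    gcongr
  · filter_upwards [h_pos, hhg, self_mem_nhdsWithin] with ε hhε hle (hε : 0 < ε)
    gcongr

protected theorem add (hf : HasUltradiscreteLimit f a) (hg : HasUltradiscreteLimit g b) :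
    HasUltradiscreteLimit (fun ε ↦ f ε + g ε) (max a b) := by
  have h_two_max : HasUltradiscreteLimit (fun ε ↦ 2 * max (f ε) (g ε)) (max a b) := by
    simpa only [zero_add] using (const two_pos).mul (hf.max hg)
  refine (hf.max hg).squeeze h_two_max ?_ (.of_forall fun ε ↦ ?_)
  · filter_upwards [hf.eventually_pos, hg.eventually_pos] with ε hfε hgε
      using max_le_add_of_nonneg hfε.le hgε.le
  · rw [two_mul]
    exact add_le_add (le_max_left _ _) (le_max_right _ _)

theorem tendsto_zero_of_neg (hf : HasUltradiscreteLimit f a) (ha : a < 0) :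
    Tendsto f (𝓝[>] 0) (𝓝 0) := by
  have h_log : Tendsto (fun ε ↦ ε⁻¹ * (ε * Real.log (f ε))) (𝓝[>] 0) atBot :=
    tendsto_inv_nhdsGT_zero.atTop_mul_neg ha hf.tendsto
  refine (Real.tendsto_exp_atBot.comp h_log).congr' ?_
  filter_upwards [hf.eventually_pos, self_mem_nhdsWithin] with ε hfε (hε : 0 < ε)
  rw [Function.comp_apply, inv_mul_cancel_left₀ hε.ne', Real.exp_log hfε]

theorem sub_of_lt (hf : HasUltradiscreteLimit f a) (hg : HasUltradiscreteLimit g b) (hba : b < a) :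
    HasUltradiscreteLimit (fun ε ↦ f ε - g ε) a := by
  have h_ratio : Tendsto (fun ε ↦ g ε / f ε) (𝓝[>] 0) (𝓝 0) :=
    (hg.div hf).tendsto_zero_of_neg (sub_neg.mpr hba)
  have h_factor : HasUltradiscreteLimit (fun ε ↦ 1 - g ε / f ε) 0 :=
    of_tendsto_pos (c := 1) (by simpa only [sub_zero] using h_ratio.const_sub 1) one_pos
  have h_prod := hf.mul h_factor
  rw [add_zero] at h_prod
  have h_eq : ∀ᶠ ε in 𝓝[>] 0, f ε * (1 - g ε / f ε) = f ε - g ε := by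
    filter_upwards [hf.eventually_pos] with ε hfε
    rw [mul_one_sub, mul_div_cancel₀ _ hfε.ne']
  exact h_prod.squeeze h_prod (h_eq.mono fun _ ↦ le_of_eq) (h_eq.mono fun _ ↦ ge_of_eq)

end HasUltradiscreteLimit

/-- The dispersion factor `φ_ε(P)`, with `δ_ε = e^{-r/ε}`, `κ_ε = e^{-s/ε}` and all parameters
real. -/
noncomputable def dispersionFactor (l m n r s P ε : ℝ) : ℝ :=
  Real.exp (n * P / ε) * (1 + Real.exp (-r / ε) * Real.exp (P / ε)) ^ l *
    (1 + Real.exp (-s / ε) * Real.exp (-P / ε)) ^ (-m)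

/-- The one-soliton exponential `η^ε` with spectral parameters `e^{P/ε}`, `e^{Q/ε}` and amplitude
`e^{A/ε}`. -/
noncomputable def solitonExponential (l m n r s P Q A ε : ℝ) : ℝ :=
  Real.exp (A / ε) * dispersionFactor l m n r s P ε / dispersionFactor l m n r s Q ε

/-- The two-soliton interaction coefficient `θ₁₂^ε`. -/
noncomputable def interactionCoeff (P₁ P₂ Q₁ Q₂ ε : ℝ) : ℝ :=
  (Real.exp (P₂ / ε) - Real.exp (P₁ / ε)) * (Real.exp (Q₁ / ε) - Real.exp (Q₂ / ε)) /
    ((Real.exp (Q₁ / ε) - Real.exp (P₂ / ε)) * (Real.exp (Q₂ / ε) - Real.exp (P₁ / ε)))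

/-- The two-soliton tau function `τ_ε`. -/
noncomputable def twoSolitonTau (l m n r s P₁ P₂ Q₁ Q₂ A₁ A₂ ε : ℝ) : ℝ :=
  1 + solitonExponential l m n r s P₁ Q₁ A₁ ε + solitonExponential l m n r s P₂ Q₂ A₂ ε +
    interactionCoeff P₁ P₂ Q₁ Q₂ ε * solitonExponential l m n r s P₁ Q₁ A₁ ε *
      solitonExponential l m n r s P₂ Q₂ A₂ ε

/-- The piecewise linear phase `Θ` of an ultradiscrete soliton. -/
def ultradiscretePhase (l m n r s P Q A : ℝ) : ℝ :=
  A + n * (P - Q) + l * (max 0 (P - r) - max 0 (Q - r)) +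
    m * (max 0 (-Q - s) - max 0 (-P - s))

section Soliton

open HasUltradiscreteLimit

variable (l m n r s : ℝ)

theorem hasUltradiscreteLimit_dispersionFactor (P : ℝ) :
    HasUltradiscreteLimit (dispersionFactor l m n r s P)
      (n * P + l * max 0 (P - r) - m * max 0 (-P - s)) := by
  have h_one_add (c p : ℝ) : HasUltradiscreteLimit
      (fun ε ↦ 1 + Real.exp (-c / ε) * Real.exp (p / ε)) (max 0 (p - c)) := by
    simpa only [neg_add_eq_sub] using (const one_pos).add ((exp_div (-c)).mul (exp_div p))
  rw [sub_eq_add_neg, ← neg_mul]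
  exact
    ((exp_div (n * P)).mul ((h_one_add r P).rpow_const l)).mul ((h_one_add s (-P)).rpow_const (-m))

theorem hasUltradiscreteLimit_solitonExponential (P Q A : ℝ) :
    HasUltradiscreteLimit (solitonExponential l m n r s P Q A)
      (ultradiscretePhase l m n r s P Q A) := by
  have hη : HasUltradiscreteLimit (solitonExponential l m n r s P Q A) _ :=
    ((exp_div A).mul (hasUltradiscreteLimit_dispersionFactor l m n r s P)).div
      (hasUltradiscreteLimit_dispersionFactor l m n r s Q)
  convert hη using 1
  rw [ultradiscretePhase]
  ring

variable {P₁ P₂ Q₁ Q₂ : ℝ}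

theorem hasUltradiscreteLimit_interactionCoeff
    (hP : P₁ < P₂) (hQ : Q₂ < Q₁) (hPQ₁ : P₂ < Q₁) (hPQ₂ : P₁ < Q₂) :
    HasUltradiscreteLimit (interactionCoeff P₁ P₂ Q₁ Q₂) (P₂ - Q₂) := by
  have h_exp_sub {a b : ℝ} (hba : b < a) :
      HasUltradiscreteLimit (fun ε ↦ Real.exp (a / ε) - Real.exp (b / ε)) a :=
    (exp_div a).sub_of_lt (exp_div b) hba
  rw [← add_sub_add_left_eq_sub P₂ Q₂ Q₁, add_comm Q₁ P₂]
  exact ((h_exp_sub hP).mul (h_exp_sub hQ)).div ((h_exp_sub hPQ₁).mul (h_exp_sub hPQ₂))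

theorem stmt_18_general (A₁ A₂ : ℝ)
    (hP : P₁ < P₂) (hQ : Q₂ < Q₁) (hPQ₁ : P₂ < Q₁) (hPQ₂ : P₁ < Q₂) :
    HasUltradiscreteLimit (twoSolitonTau l m n r s P₁ P₂ Q₁ Q₂ A₁ A₂)
      (max 0 (max (ultradiscretePhase l m n r s P₁ Q₁ A₁)
        (max (ultradiscretePhase l m n r s P₂ Q₂ A₂)
          (ultradiscretePhase l m n r s P₁ Q₁ A₁ + ultradiscretePhase l m n r s P₂ Q₂ A₂
            + P₂ - Q₂)))) := by
  have hη₁ := hasUltradiscreteLimit_solitonExponential l m n r s P₁ Q₁ A₁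
  have hη₂ := hasUltradiscreteLimit_solitonExponential l m n r s P₂ Q₂ A₂
  have hθ := hasUltradiscreteLimit_interactionCoeff hP hQ hPQ₁ hPQ₂
  have hτ : HasUltradiscreteLimit (twoSolitonTau l m n r s P₁ P₂ Q₁ Q₂ A₁ A₂) _ :=
    (((const one_pos).add hη₁).add hη₂).add ((hθ.mul hη₁).mul hη₂)
  convert hτ using 1
  rw [max_assoc, max_assoc]
  ring_nf

end Soliton

/-- ultra-discrete limit of the two-soliton τ-function:
`ε·log τ_ε → max(0, Θ₁, Θ₂, Θ₁ + Θ₂ + P₂ − Q₂)` as `ε → 0⁺`. -/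
theorem stmt_18 (l m n : ℤ) (r s : ℕ) (P₁ P₂ Q₂ Q₁ : ℤ) (A₁ A₂ : ℤ)
    (h₁₂ : P₁ < P₂) (h₂₂ : P₂ < Q₂) (h₂₁ : Q₂ < Q₁) :
    let φ : ℤ → ℝ → ℝ := fun Pp ε =>
      Real.exp ((n : ℝ) * (Pp : ℝ) / ε) *
        (1 + Real.exp (-(r : ℝ) / ε) * Real.exp ((Pp : ℝ) / ε)) ^ l *
        (1 + Real.exp (-(s : ℝ) / ε) * Real.exp (-(Pp : ℝ) / ε)) ^ (-m)
    let η : ℤ → ℤ → ℤ → ℝ → ℝ := fun Pp Qq Aa ε =>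
      Real.exp ((Aa : ℝ) / ε) * φ Pp ε / φ Qq ε
    let θ₁₂ : ℝ → ℝ := fun ε =>
      (Real.exp ((P₂ : ℝ) / ε) - Real.exp ((P₁ : ℝ) / ε)) *
        (Real.exp ((Q₁ : ℝ) / ε) - Real.exp ((Q₂ : ℝ) / ε)) /
        ((Real.exp ((Q₁ : ℝ) / ε) - Real.exp ((P₂ : ℝ) / ε)) *
          (Real.exp ((Q₂ : ℝ) / ε) - Real.exp ((P₁ : ℝ) / ε)))
    let τ : ℝ → ℝ := fun ε =>
      1 + η P₁ Q₁ A₁ ε + η P₂ Q₂ A₂ ε + θ₁₂ ε * η P₁ Q₁ A₁ ε * η P₂ Q₂ A₂ ε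
    let Θ : ℤ → ℤ → ℤ → ℝ := fun Pp Qq Aa =>
      (Aa : ℝ) + (n : ℝ) * ((Pp : ℝ) - (Qq : ℝ)) +
        (l : ℝ) * (max 0 ((Pp : ℝ) - (r : ℝ)) - max 0 ((Qq : ℝ) - (r : ℝ))) +
        (m : ℝ) * (max 0 (-(Qq : ℝ) - (s : ℝ)) - max 0 (-(Pp : ℝ) - (s : ℝ)))
    Filter.Tendsto (fun ε : ℝ => ε * Real.log (τ ε))
      (nhdsWithin 0 (Set.Ioi 0))
      (nhds (max 0 (max (Θ P₁ Q₁ A₁) (max (Θ P₂ Q₂ A₂)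
        (Θ P₁ Q₁ A₁ + Θ P₂ Q₂ A₂ + (P₂ : ℝ) - (Q₂ : ℝ)))))) := by
  have hP : (P₁ : ℝ) < P₂ := mod_cast h₁₂
  have hPQ : (P₂ : ℝ) < Q₂ := mod_cast h₂₂
  have hQ : (Q₂ : ℝ) < Q₁ := mod_cast h₂₁
  simpa only [twoSolitonTau, solitonExponential, dispersionFactor, interactionCoeff,
    ultradiscretePhase, ← Int.cast_neg, Real.rpow_intCast] using
    (stmt_18_general l m n r s A₁ A₂ hP hQ (hPQ.trans hQ) (hP.trans hPQ)).tendsto
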